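/- Let α be a simple root such that α ∈ ℤΓ and such that at least two elements λ of F satisfy ⟨α^∨, λ⟩ ≠ 0. If λ ∈ F satisfies λ^#(α) > 0, then for every simple root β with ⟨β^∨, λ⟩ ≠ 0 there exists μ ∈ F with μ ≠ λ and ⟨β^∨, μ⟩ ≠ 0. -/

import Mathlib

open scoped RealInnerProductSpace

/-- The Cartan pairing `⟨α^∨, x⟩ = 2(α,x)/(α,α)`. -/
noncomputable def cpair {V : Type*} [NormedAddCommGroup V] [InnerProductSpace ℝ V]
    (α x : V) : ℝ :=
  2 * ⟪α, x⟫ / ⟪α, α⟫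

/-- A finite reduced crystallographic root system `Φ` in `V`, together with a fixed base `S`
(the set of simple roots): every root is a nonnegative or nonpositive integer combination of
simple roots. -/
structure BasedRootSystem (V : Type*) [NormedAddCommGroup V] [InnerProductSpace ℝ V] where
  Φ : Set V
  S : Set V
  finite : Φ.Finite
  ne_zero : ∀ α ∈ Φ, α ≠ 0
  neg_mem : ∀ α ∈ Φ, -α ∈ Φ
  reflect_mem : ∀ α ∈ Φ, ∀ β ∈ Φ, β - cpair α β • α ∈ Φ
  pairing_int : ∀ α ∈ Φ, ∀ β ∈ Φ, ∃ n : ℤ, cpair α β = n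
  reduced : ∀ α ∈ Φ, ∀ t : ℝ, t • α ∈ Φ → t = 1 ∨ t = -1
  base_subset : S ⊆ Φ
  base_indep : LinearIndependent ℝ ((↑) : S → V)
  pos_or_neg : ∀ β ∈ Φ,
      (∃ (t : Finset V) (c : V → ℕ), ↑t ⊆ S ∧ β = ∑ s ∈ t, (c s : ℝ) • s) ∨
      (∃ (t : Finset V) (c : V → ℕ), ↑t ⊆ S ∧ -β = ∑ s ∈ t, (c s : ℝ) • s)

/-- `β` is a positive root: a root which is a nonnegative integer combination of the
simple roots. -/
def BasedRootSystem.IsPositiveRoot {V : Type*} [NormedAddCommGroup V] [InnerProductSpace ℝ V]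
    (R : BasedRootSystem V) (β : V) : Prop :=
  β ∈ R.Φ ∧ ∃ (t : Finset V) (c : V → ℕ), ↑t ⊆ R.S ∧ β = ∑ s ∈ t, (c s : ℝ) • s

/-- `lam` is a dominant weight: `⟨β^∨, lam⟩` is a nonnegative integer for every simple
root `β`. -/
def BasedRootSystem.IsDominant {V : Type*} [NormedAddCommGroup V] [InnerProductSpace ℝ V]
    (R : BasedRootSystem V) (lam : V) : Prop :=
  ∀ β ∈ R.S, ∃ n : ℕ, cpair β lam = n

section CartanPairing

variable {V : Type*} [NormedAddCommGroup V] [InnerProductSpace ℝ V]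

lemma cpair_add (β x y : V) : cpair β (x + y) = cpair β x + cpair β y := by
  simp only [cpair, inner_add_right]
  ring

lemma cpair_zero (β : V) : cpair β 0 = 0 := by
  simp [cpair]

lemma cpair_zsmul (β : V) (n : ℤ) (x : V) : cpair β (n • x) = n * cpair β x := by
  rw [← Int.cast_smul_eq_zsmul ℝ n x]
  simp only [cpair, inner_smul_right]
  ring

/-- If `cpair β` vanishes on all members of `F` other than `lam`, then on the lattice generated
by `F` it is the `lam`-coordinate `f` times `cpair β lam`. -/
lemma cpair_eq_coord_mul {F : Set V} {β lam : V} (f : Submodule.span ℤ F →ₗ[ℤ] ℤ)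
    (hlam : ∀ h : lam ∈ F, f ⟨lam, Submodule.subset_span h⟩ = 1)
    (hβ : ∀ mu ∈ F, mu ≠ lam → cpair β mu = 0)
    (hf : ∀ mu, ∀ h : mu ∈ F, mu ≠ lam → f ⟨mu, Submodule.subset_span h⟩ = 0)
    {x : V} (hx : x ∈ Submodule.span ℤ F) :
    cpair β x = f ⟨x, hx⟩ * cpair β lam := by
  induction hx using Submodule.span_induction with
  | mem x h =>
    by_cases hxl : x = lam
    · subst hxl
      simp [hlam h]
    · simp [hf x h hxl, hβ x h hxl]
  | zero =>
    have h0 : f ⟨0, zero_mem _⟩ = 0 := f.map_zero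
    simp [h0, cpair_zero]
  | add x y hx hy ihx ihy =>
    have hadd : f ⟨x + y, add_mem hx hy⟩ = f ⟨x, hx⟩ + f ⟨y, hy⟩ := f.map_add ⟨x, hx⟩ ⟨y, hy⟩
    rw [cpair_add, ihx, ihy, hadd]
    push_cast
    ring
  | smul n x hx ih =>
    have hsmul : f ⟨n • x, Submodule.smul_mem _ n hx⟩ = n * f ⟨x, hx⟩ := f.map_smul n ⟨x, hx⟩
    rw [cpair_zsmul, ih, hsmul]
    push_cast
    ring

namespace BasedRootSystem

lemma exists_coord (R : BasedRootSystem V) {a : V} (ha : a ∈ R.S) :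
    ∃ f : V →ₗ[ℝ] ℝ, f a = 1 ∧ ∀ s ∈ R.S, s ≠ a → f s = 0 := by
  have hindep : LinearIndepOn ℝ id R.S := R.base_indep
  let b := Module.Basis.extend hindep
  have hmem : ∀ s ∈ R.S, s ∈ hindep.extend (Set.subset_univ R.S) :=
    fun s hs => hindep.subset_extend _ hs
  have hb : ∀ s (hs : s ∈ R.S), b ⟨s, hmem s hs⟩ = s :=
    fun s hs => Module.Basis.extend_apply_self hindep ⟨s, hmem s hs⟩
  refine ⟨b.coord ⟨a, hmem a ha⟩, ?_, fun s hs hsa => ?_⟩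
  · have h := b.repr_self ⟨a, hmem a ha⟩
    rw [hb a ha] at h
    simp [h]
  · nth_rewrite 1 [← hb s hs]
    simp [hsa]

lemma coord_sum_nonneg (R : BasedRootSystem V) {a : V} {f : V →ₗ[ℝ] ℝ} (hfa : f a = 1)
    (hf : ∀ s ∈ R.S, s ≠ a → f s = 0) {t : Finset V} (c : V → ℕ) (ht : ↑t ⊆ R.S) :
    0 ≤ f (∑ s ∈ t, (c s : ℝ) • s) := by
  rw [map_sum]
  refine Finset.sum_nonneg fun s hs => ?_
  rw [map_smul, smul_eq_mul]
  by_cases hsa : s = a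
  · rw [hsa, hfa]
    positivity
  · rw [hf s (ht hs) hsa, mul_zero]

/-- Distinct simple roots form an obtuse angle. -/
lemma cpair_nonpos_of_ne (R : BasedRootSystem V) {α β : V} (hα : α ∈ R.S) (hβ : β ∈ R.S)
    (hne : α ≠ β) : cpair β α ≤ 0 := by
  obtain ⟨f, hfα, hf⟩ := R.exists_coord hα
  obtain ⟨g, hgβ, hg⟩ := R.exists_coord hβ
  have hfγ : f (α - cpair β α • β) = 1 := by simp [hfα, hf β hβ hne.symm]
  have hgγ : g (α - cpair β α • β) = -cpair β α := by simp [hgβ, hg α hα hne]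
  rcases R.pos_or_neg _ (R.reflect_mem β (R.base_subset hβ) α (R.base_subset hα)) with
    ⟨t, c, ht, h⟩ | ⟨t, c, ht, h⟩
  · have := R.coord_sum_nonneg hgβ hg c ht
    rw [← h, hgγ] at this
    linarith
  · have := R.coord_sum_nonneg hfα hf c ht
    rw [← h, map_neg, hfγ] at this
    linarith

end BasedRootSystem

end CartanPairing

/-- Let `F` be a finite linearly independent set of dominant weights and
`ℤΓ` the subgroup it generates, with dual basis `λ^#` (`lsharp`).  Let `α` be a simple root
with `α ∈ ℤΓ` such that at least two elements `λ` of `F` satisfy `⟨α^∨, λ⟩ ≠ 0`.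
If `λ ∈ F` satisfies `λ^#(α) > 0`, then for every simple root `β` with `⟨β^∨, λ⟩ ≠ 0` there
exists `μ ∈ F` with `μ ≠ λ` and `⟨β^∨, μ⟩ ≠ 0`. -/
theorem codim_one_orbit_criterion {V : Type*} [NormedAddCommGroup V] [InnerProductSpace ℝ V]
    [FiniteDimensional ℝ V] (R : BasedRootSystem V) (F : Finset V)
    (hFdom : ∀ lam ∈ F, R.IsDominant lam)
    (hFindep : LinearIndependent ℝ (Subtype.val : ↥(F : Set V) → V))
    (lsharp : V → (Submodule.span ℤ (F : Set V) →ₗ[ℤ] ℤ))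
    (hlsharp : ∀ lam ∈ F, ∀ mu, ∀ hmu : mu ∈ F,
      (mu = lam → lsharp lam ⟨mu, Submodule.subset_span (Finset.mem_coe.mpr hmu)⟩ = 1) ∧
      (mu ≠ lam → lsharp lam ⟨mu, Submodule.subset_span (Finset.mem_coe.mpr hmu)⟩ = 0))
    (α : V) (hαS : α ∈ R.S) (hα : α ∈ Submodule.span ℤ (F : Set V))
    (htwo : ∃ lam ∈ F, ∃ mu ∈ F, lam ≠ mu ∧ cpair α lam ≠ 0 ∧ cpair α mu ≠ 0)
    (lam : V) (hlam : lam ∈ F) (hpos : 0 < lsharp lam ⟨α, hα⟩) :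
    ∀ β ∈ R.S, cpair β lam ≠ 0 → ∃ mu ∈ F, mu ≠ lam ∧ cpair β mu ≠ 0 := by
  intro β hβ hβlam
  by_contra! hcon
  have hpair : cpair β α = lsharp lam ⟨α, hα⟩ * cpair β lam :=
    cpair_eq_coord_mul (lsharp lam) (fun h => (hlsharp lam hlam lam h).1 rfl) hcon
      (fun mu h => (hlsharp lam hlam mu h).2) hα
  have hβlam_pos : 0 < cpair β lam := by
    obtain ⟨n, hn⟩ := hFdom lam hlam β hβ
    exact lt_of_le_of_ne (hn ▸ n.cast_nonneg) hβlam.symm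
  have hαβ : α = β := by
    by_contra hne
    have hle := R.cpair_nonpos_of_ne hαS hβ hne
    have hlt : 0 < cpair β α := hpair ▸ mul_pos (Int.cast_pos.mpr hpos) hβlam_pos
    exact hle.not_gt hlt
  subst hαβ
  obtain ⟨x, hx, y, hy, hxy, hxα, hyα⟩ := htwo
  have hxlam : x = lam := by_contra fun h => hxα (hcon x hx h)
  have hylam : y = lam := by_contra fun h => hyα (hcon y hy h)
  exact hxy (hxlam.trans hylam.symm)
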